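/- Let s, y ∈ ℝⁿ with s ≠ 0, let H be a symmetric positive definite n×n real matrix with B = H⁻¹, and let β > 0 satisfy sᵀy > −1/β. Set γ = 1/(sᵀy + 1/β), ω = 1/(sᵀy + 2/β), let H₊ be the SP-BFGS update of H with data (s, y, β), and let B₊ = H₊⁻¹. Then λ_max(B₊) ≤ Tr(B₊) ≤ (1 + β ‖y‖₂ ‖s‖₂) Tr(B) + γ ‖y‖₂², where ‖·‖₂ denotes the Euclidean norm; equivalently, the smallest eigenvalue of H₊ satisfies λ_min(H₊) ≥ 1/[(1 + β ‖y‖₂ ‖s‖₂) Tr(B) + γ ‖y‖₂²]. -/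

import Mathlib

open Matrix

/-- The bilinear form of `Cᵀ * C` is controlled by the trace and the Euclidean norms. -/
theorem dotProduct_transpose_mul_self_mulVec_le {m n : Type*} [Fintype m] [Fintype n]
    (C : Matrix m n ℝ) (x y : n → ℝ) :
    x ⬝ᵥ (Cᵀ * C) *ᵥ y ≤ √(x ⬝ᵥ x) * √(y ⬝ᵥ y) * (Cᵀ * C).trace := by
  have norm_bound (z : n → ℝ) : (C *ᵥ z) ⬝ᵥ (C *ᵥ z) ≤ (z ⬝ᵥ z) * (Cᵀ * C).trace := by
    rw [trace_mul_comm, trace, Finset.mul_sum]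
    refine Finset.sum_le_sum fun i _ => ?_
    have := Finset.sum_mul_sq_le_sq_mul_sq Finset.univ (C i) z
    simp only [mulVec, dotProduct, diag_apply, mul_apply, transpose_apply, ← sq] at this ⊢
    linarith
  have trace_nonneg : 0 ≤ (Cᵀ * C).trace := by
    simp only [trace, diag_apply, mul_apply, transpose_apply]
    exact Finset.sum_nonneg fun i _ => Finset.sum_nonneg fun j _ => mul_self_nonneg _
  have self_nonneg (z : n → ℝ) : 0 ≤ z ⬝ᵥ z := Finset.sum_nonneg fun i _ => mul_self_nonneg _
  calc x ⬝ᵥ (Cᵀ * C) *ᵥ y = (C *ᵥ x) ⬝ᵥ (C *ᵥ y) := by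
        rw [← mulVec_mulVec, dotProduct_mulVec, vecMul_transpose]
    _ ≤ √((C *ᵥ x) ⬝ᵥ (C *ᵥ x)) * √((C *ᵥ y) ⬝ᵥ (C *ᵥ y)) := by
        have := Real.sum_mul_le_sqrt_mul_sqrt Finset.univ (C *ᵥ x) (C *ᵥ y)
        simpa only [dotProduct, ← sq] using this
    _ ≤ √((x ⬝ᵥ x) * (Cᵀ * C).trace) * √((y ⬝ᵥ y) * (Cᵀ * C).trace) := by
        gcongr <;> exact norm_bound _
    _ = √(x ⬝ᵥ x) * √(y ⬝ᵥ y) * (Cᵀ * C).trace := by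
        rw [Real.sqrt_mul (self_nonneg x), Real.sqrt_mul (self_nonneg y)]
        linear_combination √(x ⬝ᵥ x) * √(y ⬝ᵥ y) * Real.mul_self_sqrt trace_nonneg

open scoped MatrixOrder in
theorem Matrix.PosSemidef.dotProduct_mulVec_le {n : Type*} [Fintype n] [DecidableEq n]
    {A : Matrix n n ℝ} (hA : A.PosSemidef) (x y : n → ℝ) :
    x ⬝ᵥ A *ᵥ y ≤ √(x ⬝ᵥ x) * √(y ⬝ᵥ y) * A.trace := by
  obtain ⟨C, rfl⟩ := CStarAlgebra.nonneg_iff_eq_star_mul_self.mp hA.nonneg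
  simpa [star_eq_conjTranspose] using dotProduct_transpose_mul_self_mulVec_le C x y

theorem Matrix.PosSemidef.le_trace_of_mem_spectrum {n : Type*} [Fintype n] [DecidableEq n]
    {A : Matrix n n ℝ} (hA : A.PosSemidef) {μ : ℝ} (hμ : μ ∈ spectrum ℝ A) : μ ≤ A.trace := by
  rw [hA.isHermitian.spectrum_real_eq_range_eigenvalues] at hμ
  obtain ⟨i, rfl⟩ := hμ
  rw [hA.isHermitian.trace_eq_sum_eigenvalues]
  exact Finset.single_le_sum (f := hA.isHermitian.eigenvalues)
    (fun j _ => hA.eigenvalues_nonneg j) (Finset.mem_univ i)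

theorem Matrix.PosDef.inv_mem_spectrum_inv {n : Type*} [Fintype n] [DecidableEq n]
    {A : Matrix n n ℝ} (hA : A.PosDef) {μ : ℝ} (hμ : μ ∈ spectrum ℝ A) :
    0 < μ ∧ μ⁻¹ ∈ spectrum ℝ A⁻¹ := by
  have hpos : 0 < μ := by
    rw [hA.isHermitian.spectrum_real_eq_range_eigenvalues] at hμ
    obtain ⟨i, rfl⟩ := hμ
    exact hA.eigenvalues_pos i
  refine ⟨hpos, ?_⟩
  have key := spectrum.inv_mem_iff (R := ℝ) (r := Units.mk0 μ hpos.ne') (a := hA.isUnit.unit)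
  simpa [coe_units_inv] using key.mp (by simpa using hμ)

/-- The inverse of a symmetric rank-two correction of `H` along `s` and `H y`. -/
theorem rank_two_update_mul_inverse {n : Type*} [Fintype n] [DecidableEq n] {K : Type*} [Field K]
    {H B : Matrix n n K} (hHB : H * B = 1) (hH : Hᵀ = H) (hB : Bᵀ = B) (s y : n → K)
    (ω c a D : K) (ha : a = 1 - ω * (s ⬝ᵥ y))
    (hD : D = a ^ 2 + (s ⬝ᵥ B *ᵥ s) * (c - ω ^ 2 * (y ⬝ᵥ H *ᵥ y))) (hD0 : D ≠ 0) :
    (H - ω • (vecMulVec s (H *ᵥ y) + vecMulVec (H *ᵥ y) s) + c • vecMulVec s s) *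
      (B - ((c - ω ^ 2 * (y ⬝ᵥ H *ᵥ y)) / D) • vecMulVec (B *ᵥ s) (B *ᵥ s)
        + (ω * a / D) • (vecMulVec y (B *ᵥ s) + vecMulVec (B *ᵥ s) y)
        + (ω ^ 2 * (s ⬝ᵥ B *ᵥ s) / D) • vecMulVec y y) = 1 := by
  have hHb : H *ᵥ (B *ᵥ s) = s := by rw [mulVec_mulVec, hHB, one_mulVec]
  have hsB : s ᵥ* B = B *ᵥ s := by rw [← vecMul_transpose, hB]
  have huB : (H *ᵥ y) ᵥ* B = y := by
    rw [← vecMul_transpose, hH, vecMul_vecMul, hHB, vecMul_one]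
  have hub : (H *ᵥ y) ⬝ᵥ (B *ᵥ s) = s ⬝ᵥ y := by
    rw [dotProduct_mulVec, huB, dotProduct_comm]
  have huy : (H *ᵥ y) ⬝ᵥ y = y ⬝ᵥ H *ᵥ y := dotProduct_comm _ _
  simp only [add_mul, sub_mul, mul_add, mul_sub, Matrix.smul_mul, Matrix.mul_smul,
    mul_vecMulVec, vecMulVec_mul, add_mulVec, smul_mulVec,
    vecMulVec_mulVec, hHB, hHb, hsB, huB, hub, huy]
  ext i j
  simp only [Matrix.add_apply, Matrix.sub_apply, Matrix.smul_apply, vecMulVec_apply, smul_eq_mul,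
    Pi.add_apply, Pi.smul_apply, op_smul_eq_smul]
  generalize s ⬝ᵥ B *ᵥ s = d at *
  generalize y ⬝ᵥ H *ᵥ y = h at *
  generalize s ⬝ᵥ y = σ at *
  field_simp
  subst hD ha
  ring


/-- **Eigenvalue bound for the SP-BFGS Hessian approximation `B₊ = H₊⁻¹`.**
`λ_max(B₊) ≤ Tr(B₊) ≤ (1 + β‖y‖₂‖s‖₂) Tr(B) + γ‖y‖₂²`; equivalently, the smallest
eigenvalue of `H₊` is at least `1/[(1 + β‖y‖₂‖s‖₂) Tr(B) + γ‖y‖₂²]`. -/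
theorem spbfgs_inverse_eigenvalue_bound
    {n : ℕ} (s y : Fin n → ℝ) (hs : s ≠ 0)
    (H : Matrix (Fin n) (Fin n) ℝ) (hH : H.PosDef)
    (B : Matrix (Fin n) (Fin n) ℝ) (hB : B = H⁻¹)
    (β : ℝ) (hβ : 0 < β) (hcurv : -(1 / β) < s ⬝ᵥ y)
    (γ ω : ℝ) (hγ : γ = 1 / (s ⬝ᵥ y + 1 / β)) (hω : ω = 1 / (s ⬝ᵥ y + 2 / β))
    (Hplus : Matrix (Fin n) (Fin n) ℝ)
    (hHplus : Hplus =
      (1 - ω • vecMulVec s y) * H * (1 - ω • vecMulVec y s) +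
        (ω * (γ / ω + (γ - ω) * (y ⬝ᵥ H *ᵥ y))) • vecMulVec s s)
    (Bplus : Matrix (Fin n) (Fin n) ℝ) (hBplus : Bplus = Hplus⁻¹) :
    (∀ μ ∈ spectrum ℝ Bplus, μ ≤ Matrix.trace Bplus) ∧
      Matrix.trace Bplus ≤
        (1 + β * Real.sqrt (y ⬝ᵥ y) * Real.sqrt (s ⬝ᵥ s)) * Matrix.trace B +
          γ * Real.sqrt (y ⬝ᵥ y) ^ 2 ∧
      ∀ μ ∈ spectrum ℝ Hplus,
        1 / ((1 + β * Real.sqrt (y ⬝ᵥ y) * Real.sqrt (s ⬝ᵥ s)) * Matrix.trace B +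
            γ * Real.sqrt (y ⬝ᵥ y) ^ 2) ≤ μ := by
  have hsy : 0 < s ⬝ᵥ y + 1 / β := by linarith
  have hsy' : 0 < s ⬝ᵥ y + 2 / β := by
    have : 0 < 1 / β := by positivity
    have : 2 / β = 1 / β + 1 / β := by ring
    linarith
  have hγ0 : 0 < γ := by rw [hγ]; positivity
  have hω0 : 0 < ω := by rw [hω]; positivity
  have hωγ : ω ≤ γ := by
    rw [hγ, hω]
    gcongr
    norm_num
  have hBpos : B.PosDef := hB ▸ hH.inv
  have hHB : H * B = 1 := by
    rw [hB, mul_nonsing_inv _ ((isUnit_iff_isUnit_det H).mp hH.isUnit)]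
  have hHT : Hᵀ = H := by simpa using hH.isHermitian.eq
  have hBT : Bᵀ = B := by simpa using hBpos.isHermitian.eq
  have hd : 0 < s ⬝ᵥ B *ᵥ s := by simpa using hBpos.dotProduct_mulVec_pos hs
  have hh : 0 ≤ y ⬝ᵥ H *ᵥ y := by simpa using hH.posSemidef.dotProduct_mulVec_nonneg y
  set d := s ⬝ᵥ B *ᵥ s with hd_def
  set h := y ⬝ᵥ H *ᵥ y with hh_def
  set a := 1 - ω * (s ⬝ᵥ y) with ha_def
  have ha : a * β = 2 * ω := by
    have hω1 : ω * (s ⬝ᵥ y + 2 / β) = 1 := by rw [hω, one_div_mul_cancel hsy'.ne']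
    have : a = 2 * ω / β := by linear_combination -hω1
    rw [this, div_mul_cancel₀ _ hβ.ne']
  set c := γ + ω * γ * h with hc_def
  have hκ : γ ≤ c - ω ^ 2 * h := by
    have : c - ω ^ 2 * h = γ + ω * (γ - ω) * h := by rw [hc_def]; ring
    have : 0 ≤ ω * (γ - ω) * h := mul_nonneg (mul_nonneg hω0.le (sub_nonneg.mpr hωγ)) hh
    linarith
  set D := a ^ 2 + d * (c - ω ^ 2 * h) with hD_def
  have hdκ : d * γ ≤ d * (c - ω ^ 2 * h) := by gcongr
  have hdγ : 0 < d * γ := by positivity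
  have hD0 : 0 < D := by nlinarith [sq_nonneg a]
  have hHplus_eq : Hplus =
      H - ω • (vecMulVec s (H *ᵥ y) + vecMulVec (H *ᵥ y) s) + c • vecMulVec s s := by
    have hyH : y ᵥ* H = H *ᵥ y := by rw [← vecMul_transpose, hHT]
    have hyu : (H *ᵥ y) ⬝ᵥ y = h := dotProduct_comm _ _
    rw [hHplus]
    simp only [sub_mul, mul_sub, one_mul, mul_one, Matrix.smul_mul, Matrix.mul_smul,
      mul_vecMulVec, vecMulVec_mul, smul_mulVec,
    vecMulVec_mulVec, hyH, hyu]
    ext i j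
    simp only [Matrix.add_apply, Matrix.sub_apply, Matrix.smul_apply, vecMulVec_apply, smul_eq_mul,
      Pi.smul_apply, op_smul_eq_smul, hc_def]
    field_simp
    ring
  have hmul := rank_two_update_mul_inverse hHB hHT hBT s y ω c a D ha_def hD_def hD0.ne'
  rw [← hHplus_eq] at hmul
  have hBplus_eq := hBplus.trans (inv_eq_right_inv hmul)
  have hHplus_pos : Hplus.PosDef := by
    have hsemi : Hplus.PosSemidef := by
      rw [hHplus]
      refine PosSemidef.add ?_ (PosSemidef.smul ?_ ?_)
      · have := hH.posSemidef.mul_mul_conjTranspose_same (1 - ω • vecMulVec s y)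
        simpa [transpose_vecMulVec] using this
      · simpa using posSemidef_vecMulVec_self_star s
      · have := sub_nonneg.mpr hωγ
        positivity
    exact hsemi.posDef_iff_isUnit.mpr (IsUnit.of_mul_eq_one _ hmul)
  have hBplus_pos : Bplus.PosDef := hBplus ▸ hHplus_pos.inv
  have hbound : Bplus.trace ≤ (1 + β * √(y ⬝ᵥ y) * √(s ⬝ᵥ s)) * B.trace + γ * √(y ⬝ᵥ y) ^ 2 := by
    have hyy : 0 ≤ y ⬝ᵥ y := Finset.sum_nonneg fun i _ => mul_self_nonneg _
    have hbb : 0 ≤ (B *ᵥ s) ⬝ᵥ (B *ᵥ s) := Finset.sum_nonneg fun i _ => mul_self_nonneg _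
    have hCS := hBpos.posSemidef.dotProduct_mulVec_le y s
    have hR : 0 ≤ √(y ⬝ᵥ y) * √(s ⬝ᵥ s) * B.trace :=
      mul_nonneg (by positivity) hBpos.posSemidef.trace_nonneg
    have ha0 : 0 < a := pos_of_mul_pos_left (ha ▸ by positivity : 0 < a * β) hβ.le
    have hcross : 2 * (ω * a / D) ≤ β := by
      rw [← mul_div_assoc, div_le_iff₀ hD0]
      nlinarith
    have hquad : ω ^ 2 * d / D ≤ γ := by
      rw [div_le_iff₀ hD0]
      have : ω ^ 2 ≤ γ ^ 2 := by gcongr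
      nlinarith [sq_nonneg a]
    have hneg : 0 ≤ (c - ω ^ 2 * h) / D * ((B *ᵥ s) ⬝ᵥ (B *ᵥ s)) :=
      mul_nonneg (div_nonneg (hγ0.le.trans hκ) hD0.le) hbb
    have htrace : Bplus.trace = B.trace - (c - ω ^ 2 * h) / D * ((B *ᵥ s) ⬝ᵥ (B *ᵥ s))
        + 2 * (ω * a / D) * (y ⬝ᵥ B *ᵥ s) + ω ^ 2 * d / D * (y ⬝ᵥ y) := by
      rw [hBplus_eq]
      simp only [trace_add, trace_sub, trace_smul, trace_vecMulVec, smul_eq_mul,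
        dotProduct_comm (B *ᵥ s) y]
      ring
    have hcross' : 2 * (ω * a / D) * (y ⬝ᵥ B *ᵥ s) ≤ β * (√(y ⬝ᵥ y) * √(s ⬝ᵥ s) * B.trace) :=
      (mul_le_mul_of_nonneg_left hCS (by positivity)).trans (mul_le_mul_of_nonneg_right hcross hR)
    have hquad' := mul_le_mul_of_nonneg_right hquad hyy
    rw [Real.sq_sqrt hyy, htrace]
    linarith
  refine ⟨fun μ hμ => hBplus_pos.posSemidef.le_trace_of_mem_spectrum hμ, hbound, fun μ hμ => ?_⟩
  obtain ⟨hμ0, hμinv⟩ := hHplus_pos.inv_mem_spectrum_inv hμ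
  rw [← hBplus] at hμinv
  have hle := (hBplus_pos.posSemidef.le_trace_of_mem_spectrum hμinv).trans hbound
  rw [one_div]
  exact inv_le_of_inv_le₀ hμ0 hle
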